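/- (Laminate necessity: only the half-half laminate direction can degenerate.) Assume the Gutiérrez conditions. Let χ : ℝ → {0,1} be measurable and 1-periodic, set θ₁ := ∫₀¹ χ(t) dt, and consider the laminate medium with quadratic form A·𝕃(x)A = χ(x₁)Q₁(A) + (1−χ(x₁))Q₂(A). Let a, b ∈ ℝ² and M = a⊗b be a rank-one matrix, and suppose there exists a sequence (vₙ) of Lipschitz ℤ²-periodic maps ℝ² → ℝ² with sup_n ∫_{[0,1)²} |Dvₙ(x)|² dx < ∞ and ∫_{[0,1)²} (M + Dvₙ(x))·𝕃(x)(M + Dvₙ(x)) dx → 0 as n → ∞. Then M₁₁ = M₁₂ = M₂₁ = 0, so M = κ e₂⊗e₂ for some κ ∈ ℝ; and if θ₁ ≠ 1/2 then M = 0. -/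

import Mathlib

open MeasureTheory

/-- The isotropic elasticity quadratic form on 2×2 real matrices with Lamé
parameters `lam`, `mu`: `Q_{λ,μ}(A) = (λ+2μ)(A₁₁²+A₂₂²) + 2λA₁₁A₂₂ + μ(A₁₂+A₂₁)²`. -/
def isoQ (lam mu : ℝ) (A : Matrix (Fin 2) (Fin 2) ℝ) : ℝ :=
  (lam + 2 * mu) * ((A 0 0) ^ 2 + (A 1 1) ^ 2) + 2 * lam * (A 0 0 * A 1 1)
    + mu * (A 0 1 + A 1 0) ^ 2

/-- The Jacobian matrix of a map `v : ℝ² → ℝ²` at `x`: `(jac v x) i j = ∂ⱼ vⁱ (x)`.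
(For a Lipschitz map this coincides a.e. with the total derivative, by Rademacher.) -/
noncomputable def jac (v : (Fin 2 → ℝ) → (Fin 2 → ℝ)) (x : Fin 2 → ℝ) :
    Matrix (Fin 2) (Fin 2) ℝ :=
  Matrix.of fun i j => fderiv ℝ v x (Pi.single j 1) i

/-- `ℤ²`-periodicity of a map `ℝ² → ℝ²`. -/
def ZsqPeriodic (v : (Fin 2 → ℝ) → (Fin 2 → ℝ)) : Prop :=
  ∀ (x : Fin 2 → ℝ) (z : Fin 2 → ℤ), v (x + fun i => (z i : ℝ)) = v x

/-- The unit cell `[0,1)²`. -/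
def unitCell : Set (Fin 2 → ℝ) := Set.univ.pi fun _ => Set.Ico (0 : ℝ) 1

/-- The rank-one matrix `e₂ ⊗ e₂`. -/
def e2e2 : Matrix (Fin 2) (Fin 2) ℝ := Matrix.of fun i j => if i = 1 ∧ j = 1 then 1 else 0

open Filter Topology

lemma unitCell_subset_Icc : unitCell ⊆ Set.Icc 0 1 := fun _ hx =>
  ⟨fun i => (hx i trivial).1, fun i => (hx i trivial).2.le⟩

instance isProbabilityMeasure_restrict_unitCell :
    IsProbabilityMeasure ((volume : Measure (Fin 2 → ℝ)).restrict unitCell) :=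
  ⟨by simp [unitCell, Real.volume_pi_Ico]⟩

open scoped Pointwise in
/-- The integral over the unit cell of a `ℤ²`-periodic function is translation invariant. -/
lemma setIntegral_unitCell_add {p : (Fin 2 → ℝ) → ℝ}
    (hp : ∀ (x : Fin 2 → ℝ) (z : Fin 2 → ℤ), p (x + fun i => (z i : ℝ)) = p x)
    (c : Fin 2 → ℝ) : ∫ x in unitCell, p (x + c) = ∫ x in unitCell, p x := by
  have hdom := ZSpan.isAddFundamentalDomain' (Pi.basisFun ℝ (Fin 2)) volume
  rw [ZSpan.fundamentalDomain_pi_basisFun] at hdom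
  have hinv : ∀ (g : (Submodule.span ℤ (Set.range (Pi.basisFun ℝ (Fin 2)))).toAddSubgroup)
      (x : Fin 2 → ℝ), p (g +ᵥ x) = p x := by
    rintro ⟨g, hg⟩ x
    have hg' := (Module.Basis.mem_span_iff_repr_mem ℤ (Pi.basisFun ℝ (Fin 2)) g).1 hg
    choose z hz using hg'
    have : g = fun i => (z i : ℝ) := by
      ext i
      simpa using (hz i).symm
    change p (g + x) = p x
    rw [add_comm, this, hp]
  have : Countable (Submodule.span ℤ (Set.range (Pi.basisFun ℝ (Fin 2)))).toAddSubgroup :=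
    inferInstanceAs (Countable (Submodule.span ℤ (Set.range (Pi.basisFun ℝ (Fin 2)))))
  have := hdom.setIntegral_eq (hdom.vadd_of_comm c) hinv
  change ∫ x in unitCell, p x = ∫ x in c +ᵥ unitCell, p x at this
  rw [this, ← Set.image_vadd,
    (measurePreserving_vadd c volume).setIntegral_image_emb (measurableEmbedding_const_vadd c)]
  simp only [vadd_eq_add, add_comm]

lemma integrableOn_unitCell_of_continuous {p : (Fin 2 → ℝ) → ℝ} (hp : Continuous p) :
    IntegrableOn p unitCell :=
  hp.integrableOn_Icc.mono_set unitCell_subset_Icc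

/-- Summation by parts: first differences of periodic functions in two directions may be
interchanged under the integral. -/
lemma setIntegral_sub_mul_sub {f g : (Fin 2 → ℝ) → ℝ} (hf : Continuous f) (hg : Continuous g)
    (hfp : ∀ (x : Fin 2 → ℝ) (z : Fin 2 → ℤ), f (x + fun i => (z i : ℝ)) = f x)
    (hgp : ∀ (x : Fin 2 → ℝ) (z : Fin 2 → ℤ), g (x + fun i => (z i : ℝ)) = g x)
    (c d : Fin 2 → ℝ) :
    ∫ x in unitCell, (f (x + c) - f x) * (g (x + d) - g x)
      = ∫ x in unitCell, (f (x + -d) - f x) * (g (x + -c) - g x) := by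
  have expand : ∀ c d : Fin 2 → ℝ, ∫ x in unitCell, (f (x + c) - f x) * (g (x + d) - g x)
      = (∫ x in unitCell, f (x + c) * g (x + d)) - (∫ x in unitCell, f (x + c) * g x)
        - (∫ x in unitCell, f x * g (x + d)) + ∫ x in unitCell, f x * g x := by
    intro c d
    rw [← integral_sub, ← integral_sub, ← integral_add]
    · congr 1
      ext x
      ring
    all_goals exact integrableOn_unitCell_of_continuous (by fun_prop)
  have shift : ∀ c d e : Fin 2 → ℝ, ∫ x in unitCell, f (x + c + e) * g (x + d + e)
      = ∫ x in unitCell, f (x + c) * g (x + d) := by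
    intro c d e
    rw [← setIntegral_unitCell_add (p := fun x => f (x + c) * g (x + d)) _ e]
    · simp only [add_right_comm]
    · intro x z
      rw [add_right_comm x _ c, add_right_comm x _ d, hfp, hgp]
  rw [expand, expand]
  have e1 := shift (-d) (-c) (c + d)
  have e2 := shift (-d) 0 d
  have e3 := shift 0 (-c) c
  simp only [add_zero, neg_add_cancel_right] at e2 e3
  have e1' : ∀ x : Fin 2 → ℝ, x + -d + (c + d) = x + c := fun x => by abel
  have e1'' : ∀ x : Fin 2 → ℝ, x + -c + (c + d) = x + d := fun x => by abel
  simp only [e1', e1''] at e1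
  linarith

/-- The difference quotient of the `i`-th component of `v` in the `j`-th coordinate direction. -/
noncomputable def diffQuot (v : (Fin 2 → ℝ) → (Fin 2 → ℝ)) (i j : Fin 2) (h : ℝ)
    (x : Fin 2 → ℝ) : ℝ :=
  h⁻¹ * (v (x + h • Pi.single j 1) i - v x i)

section Lipschitz

variable {v : (Fin 2 → ℝ) → (Fin 2 → ℝ)} {K : NNReal}

lemma LipschitzWith.abs_diffQuot_le (hv : LipschitzWith K v) (i j : Fin 2) (h : ℝ)
    (x : Fin 2 → ℝ) : |diffQuot v i j h x| ≤ K := by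
  rcases eq_or_ne h 0 with rfl | hh
  · simp [diffQuot]
  have key : |v (x + h • Pi.single j 1) i - v x i| ≤ K * |h| := by
    calc |v (x + h • Pi.single j 1) i - v x i|
        ≤ ‖v (x + h • Pi.single j 1) - v x‖ :=
          norm_le_pi_norm (v (x + h • Pi.single j 1) - v x) i
      _ ≤ K * ‖x + h • Pi.single j 1 - x‖ := hv.norm_sub_le _ _
      _ = K * |h| := by simp [norm_smul, Pi.norm_single]
  rw [diffQuot, abs_mul, abs_inv, inv_mul_le_iff₀ (abs_pos.2 hh)]
  linarith

lemma LipschitzWith.continuous_diffQuot (hv : LipschitzWith K v) (i j : Fin 2) (h : ℝ) :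
    Continuous (diffQuot v i j h) := by
  have := hv.continuous
  unfold diffQuot
  fun_prop

lemma LipschitzWith.ae_tendsto_diffQuot (hv : LipschitzWith K v) :
    ∀ᵐ x, ∀ i j, Tendsto (fun h => diffQuot v i j h x) (𝓝[≠] 0) (𝓝 (jac v x i j)) := by
  filter_upwards [hv.ae_differentiableAt] with x hx i j
  have := (hx.hasFDerivAt.hasLineDerivAt (Pi.single j 1)).tendsto_slope_zero
  simpa [diffQuot, jac] using (tendsto_pi_nhds.1 this) i

lemma measurable_jac (v : (Fin 2 → ℝ) → (Fin 2 → ℝ)) (i j : Fin 2) :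
    Measurable fun x => jac v x i j :=
  (measurable_pi_apply i).comp (measurable_fderiv_apply_const ℝ v (Pi.single j 1))

lemma LipschitzWith.abs_jac_le (hv : LipschitzWith K v) (i j : Fin 2) (x : Fin 2 → ℝ) :
    |jac v x i j| ≤ K := by
  calc |jac v x i j| ≤ ‖fderiv ℝ v x (Pi.single j 1)‖ :=
        norm_le_pi_norm (fderiv ℝ v x (Pi.single j 1)) i
    _ ≤ K * ‖(Pi.single j 1 : Fin 2 → ℝ)‖ :=
        (fderiv ℝ v x).le_of_opNorm_le (norm_fderiv_le_of_lipschitz ℝ hv) _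
    _ = K := by simp [Pi.norm_single]

lemma LipschitzWith.memLp_jac (hv : LipschitzWith K v) (i j : Fin 2) :
    MemLp (fun x => jac v x i j) ⊤ (volume.restrict unitCell) :=
  memLp_top_of_bound (measurable_jac v i j).aestronglyMeasurable K
    (ae_of_all _ fun x => hv.abs_jac_le i j x)

/-- The `j`-th partial derivatives of a periodic Lipschitz map are orthogonal to the bounded
periodic functions that do not depend on the `j`-th coordinate. -/
lemma LipschitzWith.setIntegral_mul_jac_eq_zero (hv : LipschitzWith K v) (hper : ZsqPeriodic v)
    (i j : Fin 2) {w : (Fin 2 → ℝ) → ℝ} (hw : Measurable w) {C : ℝ} (hwC : ∀ x, |w x| ≤ C)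
    (hwper : ∀ (x : Fin 2 → ℝ) (z : Fin 2 → ℤ), w (x + fun i => (z i : ℝ)) = w x)
    (hwj : ∀ (x : Fin 2 → ℝ) (h : ℝ), w (x + h • Pi.single j 1) = w x) :
    ∫ x in unitCell, w x * jac v x i j = 0 := by
  have hlim : Tendsto (fun h => ∫ x in unitCell, w x * diffQuot v i j h x) (𝓝[≠] 0)
      (𝓝 (∫ x in unitCell, w x * jac v x i j)) := by
    refine tendsto_integral_filter_of_dominated_convergence (fun _ => C * K) ?_ ?_
      (integrable_const _) ?_
    · exact Eventually.of_forall fun h =>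
        (hw.mul (hv.continuous_diffQuot i j h).measurable).aestronglyMeasurable
    · refine Eventually.of_forall fun h => ae_of_all _ fun x => ?_
      rw [Real.norm_eq_abs, abs_mul]
      exact mul_le_mul (hwC x) (hv.abs_diffQuot_le i j h x) (abs_nonneg _)
        ((abs_nonneg _).trans (hwC x))
    · filter_upwards [ae_restrict_of_ae hv.ae_tendsto_diffQuot] with x hx
      exact (hx i j).const_mul _
  refine tendsto_nhds_unique hlim ?_
  refine tendsto_const_nhds.congr fun h => ?_
  have hvi : Continuous fun x => v x i := (continuous_apply i).comp hv.continuous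
  have hint : ∀ c : Fin 2 → ℝ,
      Integrable (fun x => w x * v (x + c) i) (volume.restrict unitCell) := fun c =>
    (integrableOn_unitCell_of_continuous (p := fun x => v (x + c) i) (by fun_prop)).bdd_mul
      hw.aestronglyMeasurable (ae_of_all _ hwC)
  have hshift := setIntegral_unitCell_add (p := fun x => w x * v x i)
    (fun x z => by rw [hwper, hper]) (h • Pi.single j 1)
  simp only [hwj] at hshift
  have h0 := hint 0
  simp only [add_zero] at h0
  calc (0 : ℝ) = h⁻¹ * ((∫ x in unitCell, w x * v (x + h • Pi.single j 1) i)
        - ∫ x in unitCell, w x * v x i) := by rw [hshift]; ring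
    _ = ∫ x in unitCell, w x * diffQuot v i j h x := by
        rw [← integral_sub (hint _) h0, ← integral_const_mul]
        congr 1
        ext x
        simp only [diffQuot]
        ring

lemma LipschitzWith.tendsto_setIntegral_diffQuot_mul (hv : LipschitzWith K v)
    (i j k l : Fin 2) :
    Tendsto (fun h => ∫ x in unitCell, diffQuot v i j h x * diffQuot v k l h x) (𝓝[≠] 0)
      (𝓝 (∫ x in unitCell, jac v x i j * jac v x k l)) := by
  refine tendsto_integral_filter_of_dominated_convergence (fun _ => K * K) ?_ ?_
    (integrable_const _) ?_
  · exact Eventually.of_forall fun h => ((hv.continuous_diffQuot i j h).mul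
      (hv.continuous_diffQuot k l h)).aestronglyMeasurable
  · refine Eventually.of_forall fun h => ae_of_all _ fun x => ?_
    rw [Real.norm_eq_abs, abs_mul]
    exact mul_le_mul (hv.abs_diffQuot_le i j h x) (hv.abs_diffQuot_le k l h x) (abs_nonneg _)
      K.coe_nonneg
  · filter_upwards [ae_restrict_of_ae hv.ae_tendsto_diffQuot] with x hx
    exact (hx i j).mul (hx k l)

/-- The Jacobian determinant of a periodic Lipschitz map has mean zero. -/
lemma LipschitzWith.setIntegral_jac_mul_jac (hv : LipschitzWith K v) (hper : ZsqPeriodic v) :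
    ∫ x in unitCell, jac v x 0 0 * jac v x 1 1
      = ∫ x in unitCell, jac v x 0 1 * jac v x 1 0 := by
  have hneg : Tendsto (fun h : ℝ => -h) (𝓝[≠] 0) (𝓝[≠] 0) := by
    refine tendsto_nhdsWithin_iff.2 ⟨?_, ?_⟩
    · simpa using (tendsto_neg (0 : ℝ)).mono_left nhdsWithin_le_nhds
    · filter_upwards [self_mem_nhdsWithin] with h hh
      simpa using hh
  refine tendsto_nhds_unique (hv.tendsto_setIntegral_diffQuot_mul 0 0 1 1)
    (((hv.tendsto_setIntegral_diffQuot_mul 0 1 1 0).comp hneg).congr fun h => ?_)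
  have hc := hv.continuous
  have key := setIntegral_sub_mul_sub (f := fun x => v x 0) (g := fun x => v x 1)
    (by fun_prop) (by fun_prop) (fun x z => by rw [hper]) (fun x z => by rw [hper])
    (h • Pi.single 0 1) (h • Pi.single 1 1)
  have e1 : ∀ x, diffQuot v 0 1 (-h) x * diffQuot v 1 0 (-h) x
      = (h⁻¹ * h⁻¹) * ((v (x + -(h • Pi.single 1 1)) 0 - v x 0) *
        (v (x + -(h • Pi.single 0 1)) 1 - v x 1)) := fun x => by
    simp only [diffQuot, neg_smul, inv_neg]
    ring
  have e2 : ∀ x, diffQuot v 0 0 h x * diffQuot v 1 1 h x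
      = (h⁻¹ * h⁻¹) * ((v (x + h • Pi.single 0 1) 0 - v x 0) *
        (v (x + h • Pi.single 1 1) 1 - v x 1)) := fun x => by
    simp only [diffQuot]
    ring
  simp only [Function.comp_apply, e1, e2, integral_const_mul, key]

end Lipschitz

lemma sq_integral_le_integral_sq {Ω : Type*} [MeasurableSpace Ω] {P : Measure Ω}
    [IsProbabilityMeasure P] {φ : Ω → ℝ} (hφ : MemLp φ 2 P) :
    (∫ x, φ x ∂P) ^ 2 ≤ ∫ x, φ x ^ 2 ∂P := by
  have := ProbabilityTheory.variance_nonneg φ P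
  rw [ProbabilityTheory.variance_eq_sub hφ] at this
  simpa using this

/-- The laminate energy density, up to a multiple of the determinant, in terms of the trace, the
deviatoric part and the rotation part of the matrix. -/
def shiftedDensity (lam1 mu1 mu2 s : ℝ) (A : Matrix (Fin 2) (Fin 2) ℝ) : ℝ :=
  mu1 * (A 0 1 - A 1 0) ^ 2 + s * ((lam1 + 2 * mu1) * (A 0 0 + A 1 1) ^ 2)
    + (1 - s) * ((mu2 - mu1) * ((A 0 0 - A 1 1) ^ 2 + (A 0 1 + A 1 0) ^ 2))

lemma isoQ_laminate_eq (lam1 mu1 mu2 s : ℝ) (A : Matrix (Fin 2) (Fin 2) ℝ) :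
    s * isoQ lam1 mu1 A + (1 - s) * isoQ (-mu1 - mu2) mu2 A
      = shiftedDensity lam1 mu1 mu2 s A - 4 * mu1 * (A 0 0 * A 1 1 - A 0 1 * A 1 0) := by
  simp only [isoQ, shiftedDensity]
  ring

lemma setIntegral_unitCell_comp_fst {χ : ℝ → ℝ} (hχ : Measurable χ) :
    ∫ x in unitCell, χ (x 0) = ∫ t in (0 : ℝ)..1, χ t := by
  have : IsProbabilityMeasure ((volume : Measure ℝ).restrict (Set.Ico 0 1)) := ⟨by simp⟩
  rw [unitCell, volume_pi, Measure.restrict_pi_pi,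
    integral_comp_eval (μ := fun _ : Fin 2 => (volume : Measure ℝ).restrict (Set.Ico 0 1))
      (i := 0) hχ.aestronglyMeasurable, intervalIntegral.integral_of_le zero_le_one,
    integral_Ico_eq_integral_Ioc]

section Laminate

variable {v : (Fin 2 → ℝ) → (Fin 2 → ℝ)} {K : NNReal} {χ : ℝ → ℝ}

lemma memLp_comp_fst (hχ : Measurable χ) (hχ01 : ∀ t, χ t = 0 ∨ χ t = 1) :
    MemLp (fun x : Fin 2 → ℝ => χ (x 0)) ⊤ (volume.restrict unitCell) := by
  refine memLp_top_of_bound (hχ.comp (measurable_pi_apply 0)).aestronglyMeasurable 1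
    (ae_of_all _ fun x => ?_)
  rcases hχ01 (x 0) with h | h <;> simp [h]

lemma LipschitzWith.memLp_add_jac (hv : LipschitzWith K v) (M : Matrix (Fin 2) (Fin 2) ℝ)
    (i j : Fin 2) : MemLp (fun x => (M + jac v x) i j) ⊤ (volume.restrict unitCell) :=
  (memLp_const (M i j)).add (hv.memLp_jac i j)

lemma LipschitzWith.setIntegral_add_jac (hv : LipschitzWith K v) (hper : ZsqPeriodic v)
    (M : Matrix (Fin 2) (Fin 2) ℝ) (i j : Fin 2) :
    ∫ x in unitCell, (M + jac v x) i j = M i j := by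
  have h0 := hv.setIntegral_mul_jac_eq_zero hper i j (w := fun _ => 1) measurable_const
    (C := 1) (by simp) (by simp) (by simp)
  simp only [one_mul] at h0
  simp only [Matrix.add_apply]
  rw [integral_add (integrable_const _) ((hv.memLp_jac i j).integrable le_top), h0]
  simp

lemma LipschitzWith.setIntegral_mul_add_jac (hv : LipschitzWith K v) (hper : ZsqPeriodic v)
    (M : Matrix (Fin 2) (Fin 2) ℝ) (hχ : Measurable χ) (hχ01 : ∀ t, χ t = 0 ∨ χ t = 1)
    (hχper : ∀ t, χ (t + 1) = χ t) (i : Fin 2) :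
    ∫ x in unitCell, χ (x 0) * (M + jac v x) i 1 = (∫ t in (0 : ℝ)..1, χ t) * M i 1 := by
  have hX := memLp_comp_fst hχ hχ01
  have h0 := hv.setIntegral_mul_jac_eq_zero hper i 1 (w := fun x => χ (x 0))
    (hχ.comp (measurable_pi_apply 0)) (C := 1)
    (fun x => by rcases hχ01 (x 0) with h | h <;> simp [h])
    (fun x z => by
      have hp : Function.Periodic χ 1 := hχper
      simpa using hp.int_mul (z 0) (x 0))
    (by simp)
  simp only [Matrix.add_apply, mul_add]
  rw [integral_add ((hX.integrable le_top).mul_const _)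
    (((hv.memLp_jac i 1).mul' hX (r := ⊤)).integrable le_top), h0, integral_mul_const,
    setIntegral_unitCell_comp_fst hχ, add_zero]

lemma LipschitzWith.setIntegral_det_add_jac (hv : LipschitzWith K v) (hper : ZsqPeriodic v)
    (M : Matrix (Fin 2) (Fin 2) ℝ) :
    ∫ x in unitCell, ((M + jac v x) 0 0 * (M + jac v x) 1 1
      - (M + jac v x) 0 1 * (M + jac v x) 1 0) = M 0 0 * M 1 1 - M 0 1 * M 1 0 := by
  have hI : ∀ i j, Integrable (fun x => jac v x i j) (volume.restrict unitCell) :=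
    fun i j => (hv.memLp_jac i j).integrable le_top
  have hII : ∀ i j k l,
      Integrable (fun x => jac v x i j * jac v x k l) (volume.restrict unitCell) :=
    fun i j k l => ((hv.memLp_jac k l).mul' (hv.memLp_jac i j) (r := ⊤)).integrable le_top
  have h0 : ∀ i j, ∫ x in unitCell, jac v x i j = 0 := fun i j => by
    simpa using hv.setIntegral_add_jac hper 0 i j
  have expand : ∀ i j k l, ∫ x in unitCell, (M + jac v x) i j * (M + jac v x) k l
      = M i j * M k l + ∫ x in unitCell, jac v x i j * jac v x k l := by
    intro i j k l
    have e : ∀ x, (M + jac v x) i j * (M + jac v x) k l = M i j * M k l + M i j * jac v x k l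
        + M k l * jac v x i j + jac v x i j * jac v x k l := fun x => by
      simp only [Matrix.add_apply]
      ring
    have i1 := (hI k l).const_mul (M i j)
    have i2 := (hI i j).const_mul (M k l)
    have i0 : Integrable (fun _ => M i j * M k l)
      ((volume : Measure (Fin 2 → ℝ)).restrict unitCell) := integrable_const _
    simp only [e]
    rw [integral_add (by exact (i0.add i1).add i2) (hII i j k l),
      integral_add (by exact i0.add i1) i2, integral_add i0 i1]
    simp [integral_const_mul, h0]
  have hF := fun i j => hv.memLp_add_jac M i j
  rw [integral_sub (((hF 1 1).mul' (hF 0 0) (r := ⊤)).integrable le_top)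
    (((hF 1 0).mul' (hF 0 1) (r := ⊤)).integrable le_top), expand, expand,
    hv.setIntegral_jac_mul_jac hper]
  ring

lemma LipschitzWith.integrable_shiftedDensity (hv : LipschitzWith K v)
    (M : Matrix (Fin 2) (Fin 2) ℝ) (hχ : Measurable χ) (hχ01 : ∀ t, χ t = 0 ∨ χ t = 1)
    (lam1 mu1 mu2 : ℝ) :
    Integrable (fun x => shiftedDensity lam1 mu1 mu2 (χ (x 0)) (M + jac v x))
      (volume.restrict unitCell) := by
  have hX := memLp_comp_fst hχ hχ01
  have hF := fun i j => hv.memLp_add_jac M i j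
  have hsq : ∀ {f : (Fin 2 → ℝ) → ℝ}, MemLp f ⊤ (volume.restrict unitCell) →
      MemLp (fun x => f x ^ 2) ⊤ (volume.restrict unitCell) := fun hf => by
    simpa only [sq] using hf.mul' hf (r := ⊤)
  have hrot : MemLp (fun x => mu1 * ((M + jac v x) 0 1 - (M + jac v x) 1 0) ^ 2) ⊤
      (volume.restrict unitCell) := (hsq ((hF 0 1).sub (hF 1 0))).const_mul mu1
  have htr : MemLp (fun x => (lam1 + 2 * mu1) * ((M + jac v x) 0 0 + (M + jac v x) 1 1) ^ 2) ⊤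
      (volume.restrict unitCell) := (hsq ((hF 0 0).add (hF 1 1))).const_mul (lam1 + 2 * mu1)
  have hdev : MemLp (fun x => (mu2 - mu1) * (((M + jac v x) 0 0 - (M + jac v x) 1 1) ^ 2
      + ((M + jac v x) 0 1 + (M + jac v x) 1 0) ^ 2)) ⊤ (volume.restrict unitCell) :=
    ((hsq ((hF 0 0).sub (hF 1 1))).add (hsq ((hF 0 1).add (hF 1 0)))).const_mul (mu2 - mu1)
  have hY : MemLp (fun x : Fin 2 → ℝ => 1 - χ (x 0)) ⊤ (volume.restrict unitCell) :=
    (memLp_const 1).sub hX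
  exact ((hrot.add (htr.mul' hX)).add (hdev.mul' hY)).integrable le_top

/-- The laminate energy equals the integral of the shifted density when `M` is singular. -/
lemma LipschitzWith.setIntegral_isoQ_laminate_eq (hv : LipschitzWith K v) (hper : ZsqPeriodic v)
    {M : Matrix (Fin 2) (Fin 2) ℝ} (hM : M 0 0 * M 1 1 - M 0 1 * M 1 0 = 0)
    (hχ : Measurable χ) (hχ01 : ∀ t, χ t = 0 ∨ χ t = 1) (lam1 mu1 mu2 : ℝ) :
    ∫ x in unitCell, (χ (x 0) * isoQ lam1 mu1 (M + jac v x)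
        + (1 - χ (x 0)) * isoQ (-mu1 - mu2) mu2 (M + jac v x))
      = ∫ x in unitCell, shiftedDensity lam1 mu1 mu2 (χ (x 0)) (M + jac v x) := by
  have hF := fun i j => hv.memLp_add_jac M i j
  simp only [isoQ_laminate_eq]
  rw [integral_sub (hv.integrable_shiftedDensity M hχ hχ01 lam1 mu1 mu2), integral_const_mul,
    hv.setIntegral_det_add_jac hper, hM, mul_zero, sub_zero]
  exact (((hF 1 1).mul' (hF 0 0) (r := ⊤)).sub
    ((hF 1 0).mul' (hF 0 1) (r := ⊤))).integrable le_top |>.const_mul _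

/-- A bounded field that is quadratically controlled by the shifted density has its squared mean
controlled by the integral of the shifted density. -/
lemma LipschitzWith.mul_sq_setIntegral_le (hv : LipschitzWith K v)
    (M : Matrix (Fin 2) (Fin 2) ℝ) (hχ : Measurable χ) (hχ01 : ∀ t, χ t = 0 ∨ χ t = 1)
    (lam1 mu1 mu2 : ℝ) {φ : (Fin 2 → ℝ) → ℝ} (hφ : MemLp φ ⊤ (volume.restrict unitCell))
    {c : ℝ} (hc : 0 ≤ c)
    (hle : ∀ x, c * φ x ^ 2 ≤ shiftedDensity lam1 mu1 mu2 (χ (x 0)) (M + jac v x)) :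
    c * (∫ x in unitCell, φ x) ^ 2
      ≤ ∫ x in unitCell, shiftedDensity lam1 mu1 mu2 (χ (x 0)) (M + jac v x) := by
  have hφ2 := hφ.mono_exponent (p := 2) le_top
  calc c * (∫ x in unitCell, φ x) ^ 2 ≤ c * ∫ x in unitCell, φ x ^ 2 :=
        mul_le_mul_of_nonneg_left (sq_integral_le_integral_sq hφ2) hc
    _ = ∫ x in unitCell, c * φ x ^ 2 := (integral_const_mul _ _).symm
    _ ≤ _ := integral_mono (hφ2.integrable_sq.const_mul c)
        (hv.integrable_shiftedDensity M hχ hχ01 lam1 mu1 mu2) hle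

end Laminate

lemma eq_zero_of_mul_sq_le_of_tendsto_zero {E : ℕ → ℝ} (hE : Tendsto E atTop (𝓝 0)) {c m : ℝ}
    (hc : 0 < c) (h : ∀ n, c * m ^ 2 ≤ E n) : m = 0 := by
  have h0 : c * m ^ 2 ≤ 0 := ge_of_tendsto' hE h
  have : m ^ 2 ≤ 0 := nonpos_of_mul_nonpos_right h0 hc
  exact pow_eq_zero_iff two_ne_zero |>.1 (le_antisymm this (sq_nonneg m))

theorem stmt_12 (lam1 mu1 lam2 mu2 : ℝ)
    (h1 : 0 < mu1) (h2 : mu1 = -(lam2 + mu2)) (h3 : mu1 < mu2)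
    (h4 : 0 < lam1 + mu1)
    (χ : ℝ → ℝ) (hχmeas : Measurable χ) (hχ01 : ∀ t, χ t = 0 ∨ χ t = 1)
    (hχper : ∀ t, χ (t + 1) = χ t)
    (θ₁ : ℝ) (hθ : θ₁ = ∫ t in (0 : ℝ)..1, χ t)
    (a b : Fin 2 → ℝ) (M : Matrix (Fin 2) (Fin 2) ℝ)
    (hM : M = Matrix.vecMulVec a b)
    (v : ℕ → (Fin 2 → ℝ) → (Fin 2 → ℝ)) (K : ℕ → NNReal)
    (hlip : ∀ n, LipschitzWith (K n) (v n)) (hper : ∀ n, ZsqPeriodic (v n))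
    (hbd : ∃ C : ℝ, ∀ n,
      (∫ x in unitCell, ∑ i : Fin 2, ∑ j : Fin 2, (jac (v n) x i j) ^ 2) ≤ C)
    (henergy : Filter.Tendsto
      (fun n => ∫ x in unitCell,
        (χ (x 0) * isoQ lam1 mu1 (M + jac (v n) x)
          + (1 - χ (x 0)) * isoQ lam2 mu2 (M + jac (v n) x)))
      Filter.atTop (nhds 0)) :
    M 0 0 = 0 ∧ M 0 1 = 0 ∧ M 1 0 = 0 ∧
    (∃ κ : ℝ, M = κ • e2e2) ∧
    (θ₁ ≠ 1 / 2 → M = 0) := by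
  have hdet : M 0 0 * M 1 1 - M 0 1 * M 1 0 = 0 := by
    simp only [hM, Matrix.vecMulVec_apply]
    ring
  obtain rfl : lam2 = -mu1 - mu2 := by linarith
  have hE := henergy.congr fun n =>
    (hlip n).setIntegral_isoQ_laminate_eq (hper n) hdet hχmeas hχ01 lam1 mu1 mu2
  have hX := memLp_comp_fst hχmeas hχ01
  have hF := fun n i j => (hlip n).memLp_add_jac M i j
  have hXF := fun n i j => (hF n i j).mul' hX (r := ⊤)
  have hI := fun n i j => (hF n i j).integrable le_top
  have hXI := fun n i j => (hXF n i j).integrable le_top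
  have mean := fun n i j => (hlip n).setIntegral_add_jac (hper n) M i j
  have meanX := fun n i => (hlip n).setIntegral_mul_add_jac (hper n) M hχmeas hχ01 hχper i
  simp only [← hθ] at meanX
  have hrot : M 0 1 - M 1 0 = 0 := by
    refine eq_zero_of_mul_sq_le_of_tendsto_zero hE h1 fun n => ?_
    rw [← mean n 0 1, ← mean n 1 0, ← integral_sub (hI n 0 1) (hI n 1 0)]
    refine (hlip n).mul_sq_setIntegral_le M hχmeas hχ01 lam1 mu1 mu2
      (φ := fun x => (M + jac (v n) x) 0 1 - (M + jac (v n) x) 1 0)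
      ((hF n 0 1).sub (hF n 1 0)) h1.le fun x => ?_
    generalize M + jac (v n) x = A
    have hd := mul_nonneg (sub_nonneg.2 h3.le) (sq_nonneg (A 0 0 - A 1 1))
    have hs := mul_nonneg (sub_nonneg.2 h3.le) (sq_nonneg (A 0 1 + A 1 0))
    have ht := mul_nonneg (by linarith : 0 ≤ lam1 + 2 * mu1) (sq_nonneg (A 0 0 + A 1 1))
    simp only [shiftedDensity]
    rcases hχ01 (x 0) with h | h <;> simp only [h] <;> linarith
  have hdiag : M 0 0 - M 1 1 + 2 * (θ₁ * M 1 1) = 0 := by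
    have hc : 0 < min (lam1 + 2 * mu1) (mu2 - mu1) := lt_min (by linarith) (by linarith)
    refine eq_zero_of_mul_sq_le_of_tendsto_zero hE hc fun n => ?_
    rw [← meanX n 1, ← mean n 0 0, ← mean n 1 1, ← integral_sub (hI n 0 0) (hI n 1 1),
      ← integral_const_mul,
      ← integral_add (by exact (hI n 0 0).sub (hI n 1 1)) ((hXI n 1 1).const_mul 2)]
    refine (hlip n).mul_sq_setIntegral_le M hχmeas hχ01 lam1 mu1 mu2
      (φ := fun x => (M + jac (v n) x) 0 0 - (M + jac (v n) x) 1 1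
        + 2 * (χ (x 0) * (M + jac (v n) x) 1 1))
      (((hF n 0 0).sub (hF n 1 1)).add ((hXF n 1 1).const_mul 2)) hc.le fun x => ?_
    generalize M + jac (v n) x = A
    have hr := mul_nonneg h1.le (sq_nonneg (A 0 1 - A 1 0))
    have hs := mul_nonneg (sub_nonneg.2 h3.le) (sq_nonneg (A 0 1 + A 1 0))
    have hl := mul_le_mul_of_nonneg_right (min_le_left (lam1 + 2 * mu1) (mu2 - mu1))
      (sq_nonneg (A 0 0 + A 1 1))
    have hl' := mul_le_mul_of_nonneg_right (min_le_right (lam1 + 2 * mu1) (mu2 - mu1))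
      (sq_nonneg (A 0 0 - A 1 1))
    simp only [shiftedDensity]
    rcases hχ01 (x 0) with h | h <;> simp only [h] <;> linarith
  have hshear : M 0 1 - θ₁ * M 0 1 = 0 := by
    have hc : 0 < min mu1 (mu2 - mu1) := lt_min h1 (by linarith)
    refine eq_zero_of_mul_sq_le_of_tendsto_zero hE hc fun n => ?_
    rw [← meanX n 0, ← mean n 0 1, ← integral_sub (hI n 0 1) (hXI n 0 1)]
    refine (hlip n).mul_sq_setIntegral_le M hχmeas hχ01 lam1 mu1 mu2
      (φ := fun x => (M + jac (v n) x) 0 1 - χ (x 0) * (M + jac (v n) x) 0 1)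
      ((hF n 0 1).sub (hXF n 0 1)) hc.le fun x => ?_
    generalize M + jac (v n) x = A
    have hr := mul_nonneg h1.le (sq_nonneg (A 0 1 - A 1 0))
    have hd := mul_nonneg (sub_nonneg.2 h3.le) (sq_nonneg (A 0 0 - A 1 1))
    have ht := mul_nonneg (by linarith : 0 ≤ lam1 + 2 * mu1) (sq_nonneg (A 0 0 + A 1 1))
    have hl := mul_le_mul_of_nonneg_right (min_le_left mu1 (mu2 - mu1))
      (sq_nonneg (A 0 1 - A 1 0))
    have hl' := mul_le_mul_of_nonneg_right (min_le_right mu1 (mu2 - mu1))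
      (sq_nonneg (A 0 1 + A 1 0))
    have hp := mul_nonneg hc.le (sq_nonneg (A 1 0))
    have hq := mul_nonneg hc.le (sq_nonneg (A 0 1))
    simp only [shiftedDensity]
    rcases hχ01 (x 0) with h | h <;> simp only [h] <;> linarith
  have h01 : M 0 1 = 0 := by
    rcases eq_or_ne θ₁ 1 with rfl | hne
    · have e10 : M 1 0 = M 0 1 := by linarith
      have e00 : M 0 0 = -M 1 1 := by linarith
      rw [e10, e00] at hdet
      exact pow_eq_zero_iff two_ne_zero |>.1
        (le_antisymm (by nlinarith [sq_nonneg (M 1 1)]) (sq_nonneg (M 0 1)))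
    · have : (1 - θ₁) * M 0 1 = 0 := by linarith
      exact (mul_eq_zero.1 this).resolve_left (sub_ne_zero.2 hne.symm)
  have h10 : M 1 0 = 0 := by linarith
  have hprod : M 0 0 * M 1 1 = 0 := by simpa [h01] using hdet
  have h00 : M 0 0 = 0 := by
    rcases mul_eq_zero.1 hprod with h | h
    · exact h
    · simpa [h] using hdiag
  refine ⟨h00, h01, h10, ⟨M 1 1, ?_⟩, fun hne => ?_⟩
  · ext i j
    fin_cases i <;> fin_cases j <;> simp [e2e2, h00, h01, h10]
  · have h11 : M 1 1 = 0 := by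
      have : (θ₁ - 1 / 2) * M 1 1 = 0 := by linarith
      exact (mul_eq_zero.1 this).resolve_left (sub_ne_zero.2 hne)
    ext i j
    fin_cases i <;> fin_cases j <;> simp [h00, h01, h10, h11]
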